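/- Soundness of the syntactic assignment rule (AssignS): for every program variable x, every syntactic program expression e with semantic interpretation ⟦e⟧ : PStates → PVals, and every closed syntactic hyper-assertion A, the hyper-triple ⊨ {A^e_x} (x := ⟦e⟧) {A} is valid, where A^e_x denotes the syntactic hyper-assertion obtained from A by, under each state quantifier binding a state variable φ, recursively replacing every lookup φ^P(x) by the hyper-expression e[φ] (the instantiation of e in which every program-variable lookup x' is read as φ^P(x')), and each syntactic hyper-assertion is interpreted as the hyper-assertion λS. (S satisfies it). -/

import Mathlib

/-- Commands of the programming language. -/
inductive Cmd (PVar PVal : Type) : Type where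
  | skip : Cmd PVar PVal
  | assign : PVar → ((PVar → PVal) → PVal) → Cmd PVar PVal
  | havoc : PVar → Cmd PVar PVal
  | assume : ((PVar → PVal) → Prop) → Cmd PVar PVal
  | seq : Cmd PVar PVal → Cmd PVar PVal → Cmd PVar PVal
  | choice : Cmd PVar PVal → Cmd PVar PVal → Cmd PVar PVal
  | iter : Cmd PVar PVal → Cmd PVar PVal

/-- Big-step semantics ⟨C, σ⟩ → σ'. -/
inductive BigStep {PVar PVal : Type} [DecidableEq PVar] :
    Cmd PVar PVal → (PVar → PVal) → (PVar → PVal) → Prop where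
  | skip (σ : PVar → PVal) : BigStep Cmd.skip σ σ
  | assign (x : PVar) (e : (PVar → PVal) → PVal) (σ : PVar → PVal) :
      BigStep (Cmd.assign x e) σ (Function.update σ x (e σ))
  | havoc (x : PVar) (σ : PVar → PVal) (v : PVal) :
      BigStep (Cmd.havoc x) σ (Function.update σ x v)
  | assume {b : (PVar → PVal) → Prop} {σ : PVar → PVal} (h : b σ) :
      BigStep (Cmd.assume b) σ σ
  | seq {C1 C2 : Cmd PVar PVal} {σ σ' σ'' : PVar → PVal} :
      BigStep C1 σ σ' → BigStep C2 σ' σ'' → BigStep (Cmd.seq C1 C2) σ σ''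
  | choiceL {C1 C2 : Cmd PVar PVal} {σ σ' : PVar → PVal} :
      BigStep C1 σ σ' → BigStep (Cmd.choice C1 C2) σ σ'
  | choiceR {C1 C2 : Cmd PVar PVal} {σ σ' : PVar → PVal} :
      BigStep C2 σ σ' → BigStep (Cmd.choice C1 C2) σ σ'
  | iterNil {C : Cmd PVar PVal} {σ : PVar → PVal} : BigStep (Cmd.iter C) σ σ
  | iterCons {C : Cmd PVar PVal} {σ σ' σ'' : PVar → PVal} :
      BigStep C σ σ' → BigStep (Cmd.iter C) σ' σ'' → BigStep (Cmd.iter C) σ σ''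

/-- Extended states: a logical state paired with a program state. -/
abbrev EState (PVar PVal LVar LVal : Type) : Type :=
  (LVar → LVal) × (PVar → PVal)

/-- Extended semantics of a command on a set of extended states. -/
def sem {PVar PVal LVar LVal : Type} [DecidableEq PVar] (C : Cmd PVar PVal)
    (S : Set (EState PVar PVal LVar LVal)) : Set (EState PVar PVal LVar LVal) :=
  { φ | ∃ σ : PVar → PVal, (φ.1, σ) ∈ S ∧ BigStep C σ φ.2 }

/-- Hyper-assertions: predicates over sets of extended states. -/
abbrev HAssn (PVar PVal LVar LVal : Type) : Type :=
  Set (EState PVar PVal LVar LVal) → Prop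

/-- Validity of a hyper-triple ⊨ {P} C {Q}. -/
def HyperTriple {PVar PVal LVar LVal : Type} [DecidableEq PVar]
    (P : HAssn PVar PVal LVar LVal) (C : Cmd PVar PVal)
    (Q : HAssn PVar PVal LVar LVal) : Prop :=
  ∀ S : Set (EState PVar PVal LVar LVal), P S → Q (sem C S)

/-- Syntactic program expressions (constants, program-variable lookups, binary
operations, unary function applications). Program and logical values are drawn
from a single type `Val`. -/
inductive PExp (PVar Val : Type) : Type where
  | const : Val → PExp PVar Val
  | var : PVar → PExp PVar Val
  | binop : (Val → Val → Val) → PExp PVar Val → PExp PVar Val → PExp PVar Val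
  | fn : (Val → Val) → PExp PVar Val → PExp PVar Val

/-- Semantic interpretation ⟦e⟧ of a syntactic program expression. -/
def PExp.eval {PVar Val : Type} (σ : PVar → Val) : PExp PVar Val → Val
  | .const v => v
  | .var x => σ x
  | .binop op e1 e2 => op (PExp.eval σ e1) (PExp.eval σ e2)
  | .fn f e => f (PExp.eval σ e)

/-- Syntactic hyper-expressions: constants, program-variable lookups φ^P(x) and
logical-variable lookups φ^L(x) (state variables are names in ℕ), binary operations
and unary function applications. Bound values are represented as constants. -/
inductive HExp (PVar LVar Val : Type) : Type where
  | const : Val → HExp PVar LVar Val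
  | pvar : ℕ → PVar → HExp PVar LVar Val
  | lvar : ℕ → LVar → HExp PVar LVar Val
  | binop : (Val → Val → Val) → HExp PVar LVar Val → HExp PVar LVar Val → HExp PVar LVar Val
  | fn : (Val → Val) → HExp PVar LVar Val → HExp PVar LVar Val

/-- Evaluation of a hyper-expression under an environment for state variables. -/
def HExp.eval {PVar LVar Val : Type} (env : ℕ → EState PVar Val LVar Val) :
    HExp PVar LVar Val → Val
  | .const v => v
  | .pvar n x => (env n).2 x
  | .lvar n x => (env n).1 x
  | .binop op e1 e2 => op (HExp.eval env e1) (HExp.eval env e2)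
  | .fn f e => f (HExp.eval env e)

/-- Syntactic hyper-assertions: Boolean constants, comparisons of hyper-expressions,
conjunction, disjunction, value quantifiers (binding represented by Lean functions)
and state quantifiers (binding state-variable names in ℕ). -/
inductive HAssrt (PVar LVar Val : Type) : Type where
  | bconst : Prop → HAssrt PVar LVar Val
  | comp : (Val → Val → Prop) → HExp PVar LVar Val → HExp PVar LVar Val → HAssrt PVar LVar Val
  | conj : HAssrt PVar LVar Val → HAssrt PVar LVar Val → HAssrt PVar LVar Val
  | disj : HAssrt PVar LVar Val → HAssrt PVar LVar Val → HAssrt PVar LVar Val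
  | forallV : (Val → HAssrt PVar LVar Val) → HAssrt PVar LVar Val
  | existsV : (Val → HAssrt PVar LVar Val) → HAssrt PVar LVar Val
  | forallS : ℕ → HAssrt PVar LVar Val → HAssrt PVar LVar Val
  | existsS : ℕ → HAssrt PVar LVar Val → HAssrt PVar LVar Val

/-- Satisfaction of a syntactic hyper-assertion by a set S of extended states,
relative to an environment for state variables. State quantifiers range over S. -/
def HAssrt.sat {PVar LVar Val : Type} (S : Set (EState PVar Val LVar Val))
    (env : ℕ → EState PVar Val LVar Val) : HAssrt PVar LVar Val → Prop
  | .bconst b => b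
  | .comp r e1 e2 => r (HExp.eval env e1) (HExp.eval env e2)
  | .conj A B => HAssrt.sat S env A ∧ HAssrt.sat S env B
  | .disj A B => HAssrt.sat S env A ∨ HAssrt.sat S env B
  | .forallV body => ∀ v : Val, HAssrt.sat S env (body v)
  | .existsV body => ∃ v : Val, HAssrt.sat S env (body v)
  | .forallS n A => ∀ α ∈ S, HAssrt.sat S (Function.update env n α) A
  | .existsS n A => ∃ α ∈ S, HAssrt.sat S (Function.update env n α) A

/-- Free state variables of a hyper-expression. -/
def HExp.fsv {PVar LVar Val : Type} : HExp PVar LVar Val → Set ℕ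
  | .const _ => ∅
  | .pvar n _ => {n}
  | .lvar n _ => {n}
  | .binop _ e1 e2 => HExp.fsv e1 ∪ HExp.fsv e2
  | .fn _ e => HExp.fsv e

/-- Free state variables of a syntactic hyper-assertion. -/
def HAssrt.fsv {PVar LVar Val : Type} : HAssrt PVar LVar Val → Set ℕ
  | .bconst _ => ∅
  | .comp _ e1 e2 => HExp.fsv e1 ∪ HExp.fsv e2
  | .conj A B => HAssrt.fsv A ∪ HAssrt.fsv B
  | .disj A B => HAssrt.fsv A ∪ HAssrt.fsv B
  | .forallV body => ⋃ v, HAssrt.fsv (body v)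
  | .existsV body => ⋃ v, HAssrt.fsv (body v)
  | .forallS n A => HAssrt.fsv A \ {n}
  | .existsS n A => HAssrt.fsv A \ {n}

/-- A syntactic hyper-assertion is closed iff it has no free state variables. -/
def HAssrt.Closed {PVar LVar Val : Type} (A : HAssrt PVar LVar Val) : Prop :=
  HAssrt.fsv A = ∅

/-- The instantiation e[φ] of a program expression at the state variable n: every
program-variable lookup x' is read as φ^P(x'). -/
def PExp.atState {PVar LVar Val : Type} (n : ℕ) : PExp PVar Val → HExp PVar LVar Val
  | .const v => .const v
  | .var x => .pvar n x
  | .binop op e1 e2 => .binop op (PExp.atState n e1) (PExp.atState n e2)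
  | .fn f e => .fn f (PExp.atState n e)

/-- Substitution, in a hyper-expression, of every lookup φ^P(x) by e[φ], for every
state variable φ. -/
def HExp.substAssign {PVar LVar Val : Type} [DecidableEq PVar]
    (x : PVar) (e : PExp PVar Val) : HExp PVar LVar Val → HExp PVar LVar Val
  | .const v => .const v
  | .pvar n x' => if x' = x then PExp.atState n e else .pvar n x'
  | .lvar n y => .lvar n y
  | .binop op e1 e2 => .binop op (HExp.substAssign x e e1) (HExp.substAssign x e e2)
  | .fn f e' => .fn f (HExp.substAssign x e e')

/-- The syntactic transformation A^e_x: under each state quantifier binding a state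
variable φ, every lookup φ^P(x) is replaced by e[φ] (for a closed assertion this is
the simultaneous replacement of every lookup φ^P(x) by e[φ]). -/
def HAssrt.substAssign {PVar LVar Val : Type} [DecidableEq PVar]
    (x : PVar) (e : PExp PVar Val) : HAssrt PVar LVar Val → HAssrt PVar LVar Val
  | .bconst b => .bconst b
  | .comp r e1 e2 => .comp r (HExp.substAssign x e e1) (HExp.substAssign x e e2)
  | .conj A B => .conj (HAssrt.substAssign x e A) (HAssrt.substAssign x e B)
  | .disj A B => .disj (HAssrt.substAssign x e A) (HAssrt.substAssign x e B)
  | .forallV body => .forallV (fun v => HAssrt.substAssign x e (body v))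
  | .existsV body => .existsV (fun v => HAssrt.substAssign x e (body v))
  | .forallS n A => .forallS n (HAssrt.substAssign x e A)
  | .existsS n A => .existsS n (HAssrt.substAssign x e A)

/-- Effect of the assignment on an extended state. -/
def updE {PVar LVar Val : Type} [DecidableEq PVar] (x : PVar) (e : PExp PVar Val)
    (α : EState PVar Val LVar Val) : EState PVar Val LVar Val :=
  (α.1, Function.update α.2 x (PExp.eval α.2 e))

theorem mem_sem_assign {PVar LVar Val : Type} [DecidableEq PVar] (x : PVar)
    (e : PExp PVar Val) (S : Set (EState PVar Val LVar Val)) (β : EState PVar Val LVar Val) :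
    β ∈ sem (Cmd.assign x (fun σ => PExp.eval σ e)) S ↔ ∃ α ∈ S, β = updE x e α := by
  constructor
  · rintro ⟨σ, h, hb⟩
    refine ⟨_, h, ?_⟩
    obtain ⟨l, p⟩ := β
    simp only at hb
    cases hb
    rfl
  · rintro ⟨α, h, rfl⟩
    exact ⟨α.2, h, BigStep.assign x (fun σ => PExp.eval σ e) α.2⟩

theorem eval_atState {PVar LVar Val : Type} (env : ℕ → EState PVar Val LVar Val) (n : ℕ)
    (e : PExp PVar Val) :
    HExp.eval env (PExp.atState n e) = PExp.eval (env n).2 e := by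
  induction e with
  | const v => rfl
  | var x => rfl
  | binop op a b iha ihb => simp [PExp.atState, HExp.eval, PExp.eval, iha, ihb]
  | fn f a iha => simp [PExp.atState, HExp.eval, PExp.eval, iha]

theorem eval_substAssign {PVar LVar Val : Type} [DecidableEq PVar] (x : PVar)
    (e : PExp PVar Val) (env env' : ℕ → EState PVar Val LVar Val) (t : HExp PVar LVar Val)
    (h : ∀ n ∈ t.fsv, env' n = updE x e (env n)) :
    HExp.eval env (HExp.substAssign x e t) = HExp.eval env' t := by
  induction t with
  | const v => rfl
  | pvar n y =>
    have := h n rfl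
    by_cases hy : y = x
    · subst hy
      simp [HExp.substAssign, HExp.eval, this, updE, eval_atState]
    · simp [HExp.substAssign, HExp.eval, this, updE, hy]
  | lvar n y =>
    have := h n rfl
    simp [HExp.substAssign, HExp.eval, this, updE]
  | binop op a b iha ihb =>
    simp only [HExp.substAssign, HExp.eval]
    rw [iha (fun n hn => h n (Or.inl hn)), ihb (fun n hn => h n (Or.inr hn))]
  | fn f a iha =>
    simp only [HExp.substAssign, HExp.eval]
    rw [iha (fun n hn => h n hn)]

theorem updE_update {PVar LVar Val : Type} [DecidableEq PVar] (x : PVar)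
    (e : PExp PVar Val) (env env' : ℕ → EState PVar Val LVar Val) (F : Set ℕ) (n : ℕ)
    (α : EState PVar Val LVar Val) (h : ∀ k ∈ F \ {n}, env' k = updE x e (env k)) :
    ∀ k ∈ F, Function.update env' n (updE x e α) k =
      updE x e (Function.update env n α k) := by
  intro k hk
  by_cases hkn : k = n
  · subst hkn
    simp
  · simp only [Function.update_of_ne hkn]
    exact h k ⟨hk, hkn⟩

theorem sat_substAssign {PVar LVar Val : Type} [DecidableEq PVar] (x : PVar)
    (e : PExp PVar Val) (S : Set (EState PVar Val LVar Val)) (A : HAssrt PVar LVar Val) :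
    ∀ (env env' : ℕ → EState PVar Val LVar Val),
    (∀ n ∈ A.fsv, env' n = updE x e (env n)) →
    (HAssrt.sat S env (HAssrt.substAssign x e A) ↔
      HAssrt.sat (sem (Cmd.assign x (fun σ => PExp.eval σ e)) S) env' A) := by
  induction A with
  | bconst b => intros; rfl
  | comp r a b =>
    intro env env' h
    simp only [HAssrt.substAssign, HAssrt.sat]
    rw [eval_substAssign x e env env' a (fun n hn => h n (Or.inl hn)),
      eval_substAssign x e env env' b (fun n hn => h n (Or.inr hn))]
  | conj A B ihA ihB =>
    intro env env' h
    exact and_congr (ihA _ _ (fun n hn => h n (Or.inl hn))) (ihB _ _ (fun n hn => h n (Or.inr hn)))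
  | disj A B ihA ihB =>
    intro env env' h
    exact or_congr (ihA _ _ (fun n hn => h n (Or.inl hn))) (ihB _ _ (fun n hn => h n (Or.inr hn)))
  | forallV body ih =>
    intro env env' h
    exact forall_congr' (fun v => ih v _ _ (fun n hn => h n (Set.mem_iUnion.2 ⟨v, hn⟩)))
  | existsV body ih =>
    intro env env' h
    exact exists_congr (fun v => ih v _ _ (fun n hn => h n (Set.mem_iUnion.2 ⟨v, hn⟩)))
  | forallS n A ih =>
    intro env env' h
    simp only [HAssrt.substAssign, HAssrt.sat]
    constructor
    · intro H β hβ
      obtain ⟨α, hα, rfl⟩ := (mem_sem_assign x e S β).1 hβ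
      exact (ih _ _ (updE_update x e env env' _ n α h)).1 (H α hα)
    · intro H α hα
      exact (ih _ _ (updE_update x e env env' _ n α h)).2
        (H _ ((mem_sem_assign x e S _).2 ⟨α, hα, rfl⟩))
  | existsS n A ih =>
    intro env env' h
    simp only [HAssrt.substAssign, HAssrt.sat]
    constructor
    · rintro ⟨α, hα, H⟩
      exact ⟨_, (mem_sem_assign x e S _).2 ⟨α, hα, rfl⟩,
        (ih _ _ (updE_update x e env env' _ n α h)).1 H⟩
    · rintro ⟨β, hβ, H⟩
      obtain ⟨α, hα, rfl⟩ := (mem_sem_assign x e S β).1 hβ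
      exact ⟨α, hα, (ih _ _ (updE_update x e env env' _ n α h)).2 H⟩

/-- Soundness of the syntactic assignment rule (AssignS):
⊨ {A^e_x} (x := ⟦e⟧) {A} for closed A. -/
theorem assignS_sound {PVar LVar Val : Type} [DecidableEq PVar]
    (x : PVar) (e : PExp PVar Val) (A : HAssrt PVar LVar Val)
    (hclosed : A.Closed) :
    ∀ env : ℕ → EState PVar Val LVar Val,
      HyperTriple
        (fun S => HAssrt.sat S env (HAssrt.substAssign x e A))
        (Cmd.assign x (fun σ => PExp.eval σ e))
        (fun S => HAssrt.sat S env A) := by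
  intro env S h
  refine (sat_substAssign x e S A env env ?_).1 h
  intro n hn
  rw [show A.fsv = ∅ from hclosed] at hn
  exact hn.elim
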